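/- Let a_0, a_1 ∈ ℝ with a_1 ≠ 0 and a_0² < a_1². Set ω := √(a_1² − a_0²) and, for an integer p, h := (−sign(a_1)·arccos(−a_0/a_1) + 2·p·π)/ω. Then −iω + a_0 + a_1·e^{−i·h·ω} = 0; i.e. iω is a purely imaginary eigenvalue of the single-delay scalar delay-differential equation ẋ(t) = a_0·x(t) + a_1·x(t − h). -/

import Mathlib

open Complex

/-!
For `|b| ≤ |a|`, the vector `b + i √(a² - b²)` has length `|a|` and lies in the upper half-plane, so
it equals `|a| e^{iφ}` with `φ = arccos (b / |a|)`. Writing it as `a e^{iθ}` with a factor `a` of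
either sign gives `θ = sign a * arccos (b / a)` modulo `2π`: for `a < 0` the factor `-1` turns `φ`
into `φ - π = -arccos (b / a)`. The eigenvalue equation `a₁ e^{-ihω} = -a₀ + iω` is the case
`a = a₁`, `b = -a₀`, and the given `h` are the solutions of `-hω = θ` modulo `2π`.
-/

theorem mul_cos_sign_mul (a x : ℝ) : a * Real.cos (Real.sign a * x) = a * Real.cos x := by
  rcases lt_trichotomy a 0 with ha | rfl | ha
  · rw [Real.sign_of_neg ha, neg_one_mul, Real.cos_neg]
  · simp
  · rw [Real.sign_of_pos ha, one_mul]

theorem mul_sin_sign_mul (a x : ℝ) : a * Real.sin (Real.sign a * x) = |a| * Real.sin x := by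
  rcases lt_trichotomy a 0 with ha | rfl | ha
  · rw [Real.sign_of_neg ha, neg_one_mul, Real.sin_neg, abs_of_neg ha, mul_neg, neg_mul]
  · simp
  · rw [Real.sign_of_pos ha, one_mul, abs_of_pos ha]

theorem mul_cos_arccos_div {a b : ℝ} (hab : |b| ≤ |a|) :
    a * Real.cos (Real.arccos (b / a)) = b := by
  have hdiv : |b / a| ≤ 1 := by
    rw [abs_div]
    exact div_le_one_of_le₀ hab (abs_nonneg a)
  rw [Real.cos_arccos (abs_le.mp hdiv).1 (abs_le.mp hdiv).2]
  refine mul_div_cancel_of_imp' fun ha => ?_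
  rwa [ha, abs_zero, abs_nonpos_iff] at hab

theorem abs_mul_sin_arccos_div (a b : ℝ) :
    |a| * Real.sin (Real.arccos (b / a)) = √(a ^ 2 - b ^ 2) := by
  rcases eq_or_ne a 0 with rfl | ha
  · simp [Real.sqrt_eq_zero_of_nonpos, sq_nonneg]
  · rw [Real.sin_arccos, ← Real.sqrt_sq_eq_abs, ← Real.sqrt_mul (sq_nonneg a)]
    congr 1
    field_simp

theorem mul_exp_sign_mul_arccos_div_mul_I {a b : ℝ} (hab : |b| ≤ |a|) :
    (a : ℂ) * exp ((Real.sign a * Real.arccos (b / a) : ℝ) * I) = b + √(a ^ 2 - b ^ 2) * I := by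
  rw [exp_ofReal_mul_I, mul_add, ← mul_assoc]
  norm_cast
  rw [mul_cos_sign_mul, mul_sin_sign_mul, mul_cos_arccos_div hab, abs_mul_sin_arccos_div]

theorem exp_neg_I_mul_div_mul_cancel {ω : ℂ} (hω : ω ≠ 0) (θ : ℂ) (p : ℤ) :
    exp (-(I * ((-θ + 2 * p * Real.pi) / ω) * ω)) = exp (θ * I) := by
  rw [mul_assoc, div_mul_cancel₀ _ hω, ← exp_periodic.sub_int_mul_eq (x := θ * I) p]
  ring_nf

/-- Single-delay scalar case: for `a₁ ≠ 0`, `a₀² < a₁²`, `ω = √(a₁² − a₀²)` and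
`h = (−sign(a₁) arccos(−a₀/a₁) + 2 p π)/ω`, `iω` is a purely imaginary eigenvalue:
`−iω + a₀ + a₁ e^{−i h ω} = 0`. -/
theorem statement9 (a0 a1 : ℝ) (ha1 : a1 ≠ 0) (ha : a0 ^ 2 < a1 ^ 2)
    (ω : ℝ) (hω : ω = Real.sqrt (a1 ^ 2 - a0 ^ 2)) (p : ℤ)
    (h : ℝ)
    (hh : h = (-(Real.sign a1 * Real.arccos (-a0 / a1)) + 2 * (p : ℝ) * Real.pi) / ω) :
    -(Complex.I * (ω : ℂ)) + (a0 : ℂ) +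
      (a1 : ℂ) * Complex.exp (-(Complex.I * (h : ℂ) * (ω : ℂ))) = 0 := by
  have hab : |(-a0)| ≤ |a1| := by
    rw [abs_neg]
    exact (sq_lt_sq.mp ha).le
  have hω0 : (ω : ℂ) ≠ 0 := by
    rw [hω, ofReal_ne_zero]
    exact (Real.sqrt_pos.mpr (sub_pos.mpr ha)).ne'
  have hdelay := exp_neg_I_mul_div_mul_cancel hω0
    (Real.sign a1 * Real.arccos (-a0 / a1) : ℝ) p
  have hpolar := mul_exp_sign_mul_arccos_div_mul_I hab
  rw [neg_sq, ← hω, ← hdelay] at hpolar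
  rw [hh]
  push_cast at hpolar ⊢
  rw [hpolar]
  ring
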